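/- arXiv:math/0509148 — 11 statements merged into one kernel-verified Lean document; each statement's English description precedes it below -/
import Mathlib

section
/- Let S be a (unital associative) ring and let R be a subring of S. Suppose S is generated as a ring by R together with a set T of elements each of which commutes with every element of R. If every element of R is a sum of commutators [x,y] = xy - yx of elements of R, then every element of S is a sum of commutators of elements of S. -/
/-- `a` is a (finite) sum of additive commutators `x*y - y*x` of elements of the ring. -/
def IsSumOfCommutators {A : Type*} [Ring A] (a : A) : Prop :=
  ∃ (n : ℕ) (x y : Fin n → A), a = ∑ i, (x i * y i - y i * x i)

/-!
If `A` is a commutator ring, then so is `A ⊗ B` for every algebra `B`, because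
`[x, y] ⊗ b = [x ⊗ 1, y ⊗ b]`; and homomorphic images of commutator rings are commutator rings.
The ring `S` is the image of `R ⊗[ℤ] C` under multiplication, where `C` is the centralizer of `R`.
-/

open scoped TensorProduct

namespace IsSumOfCommutators

section Ring

variable {A B : Type*} [Ring A] [Ring B]

theorem zero : IsSumOfCommutators (0 : A) :=
  ⟨0, 0, 0, by simp⟩

theorem add {a b : A} (ha : IsSumOfCommutators a) (hb : IsSumOfCommutators b) :
    IsSumOfCommutators (a + b) := by
  obtain ⟨m, x, y, rfl⟩ := ha
  obtain ⟨n, z, w, rfl⟩ := hb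
  exact ⟨m + n, Fin.append x z, Fin.append y w, by
    simp only [Fin.sum_univ_add, Fin.append_left, Fin.append_right]⟩

theorem map {a : A} (ha : IsSumOfCommutators a) (f : A →+* B) : IsSumOfCommutators (f a) := by
  obtain ⟨n, x, y, rfl⟩ := ha
  exact ⟨n, f ∘ x, f ∘ y, by simp⟩

end Ring

section TensorProduct

variable {k A B : Type*} [CommRing k] [Ring A] [Algebra k A] [Semiring B] [Algebra k B]

theorem tmul {a : A} (ha : IsSumOfCommutators a) (b : B) : IsSumOfCommutators (a ⊗ₜ[k] b) := by
  obtain ⟨n, x, y, rfl⟩ := ha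
  exact ⟨n, fun i ↦ x i ⊗ₜ 1, fun i ↦ y i ⊗ₜ b, by
    simp [TensorProduct.sum_tmul, TensorProduct.sub_tmul]⟩

theorem tensorProduct (hA : ∀ a : A, IsSumOfCommutators a) (z : A ⊗[k] B) :
    IsSumOfCommutators z := by
  induction z with
  | zero => exact zero
  | tmul a b => exact (hA a).tmul b
  | add z w hz hw => exact hz.add hw

end TensorProduct

theorem of_mem_sup_centralizer {S : Type*} [Ring S] {R : Subring S}
    (hR : ∀ r : R, IsSumOfCommutators r) {s : S}
    (hs : s ∈ R ⊔ Subring.centralizer (R : Set S)) : IsSumOfCommutators s := by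
  let C := Subring.centralizer (R : Set S)
  let mulMap : R ⊗[ℤ] C →ₐ[ℤ] S :=
    Algebra.TensorProduct.lift R.subtype.toIntAlgHom C.subtype.toIntAlgHom
      fun r c ↦ c.2 r r.2
  have mulMap_tmul (r : R) (c : C) : mulMap (r ⊗ₜ c) = r * c :=
    Algebra.TensorProduct.lift_tmul ..
  have le_range : R ⊔ C ≤ mulMap.toRingHom.range :=
    sup_le (fun r hr ↦ ⟨⟨r, hr⟩ ⊗ₜ 1, (mulMap_tmul _ _).trans (mul_one r)⟩)
      (fun c hc ↦ ⟨1 ⊗ₜ ⟨c, hc⟩, (mulMap_tmul _ _).trans (one_mul c)⟩)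
  obtain ⟨z, rfl⟩ := le_range hs
  exact (tensorProduct hR z).map mulMap.toRingHom

end IsSumOfCommutators

/-- If `R ⊆ S` are rings such that `R` is a commutator ring and `S` is generated over `R`
by elements centralizing `R`, then `S` is also a commutator ring. -/
theorem stmt_0 {S : Type*} [Ring S] (R : Subring S) (T : Set S)
    (hcomm : ∀ t ∈ T, ∀ r ∈ R, t * r = r * t)
    (hgen : Subring.closure ((R : Set S) ∪ T) = ⊤)
    (hR : ∀ r : R, IsSumOfCommutators r) :
    ∀ s : S, IsSumOfCommutators s := by
  intro s
  have T_subset_centralizer : T ⊆ Subring.centralizer (R : Set S) :=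
    fun t ht r hr ↦ (hcomm t ht r hr).symm
  have closure_le : Subring.closure ((R : Set S) ∪ T) ≤ R ⊔ Subring.centralizer (R : Set S) := by
    rw [Subring.closure_union, Subring.closure_eq]
    exact sup_le_sup_left (Subring.closure_le.2 T_subset_centralizer) R
  exact .of_mem_sup_centralizer hR (closure_le (hgen ▸ Subring.mem_top s))
end

section
/- Let R be a ring, r an element of R, and e an idempotent of R; set f = 1 - e. Suppose that ere can be written as a sum of m1 commutators [e x e, e y e] of elements of the corner eRe, and frf can be written as a sum of m2 commutators [f z f, f w f] of elements of the corner fRf. Then r can be written as a sum of max(m1, m2) + 1 commutators of elements of R. -/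
/-- `a` is a sum of `k` additive commutators `x*y - y*x` of elements of the ring. -/
def IsSumOfNCommutators {A : Type*} [Ring A] (k : ℕ) (a : A) : Prop :=
  ∃ x y : Fin k → A, a = ∑ i, (x i * y i - y i * x i)

/-!
Elements of `eRe` and `(1 - e)R(1 - e)` annihilate each other, so commutators from the two corners
add up in pairs: `⁅x, y⁆ + ⁅z, w⁆ = ⁅x + z, y + w⁆`. The two diagonal Peirce blocks of `r` therefore
cost only `max m1 m2` commutators together, and the off-diagonal part of `r` is the single
commutator `⁅e, ⁅e, r⁆⁆`.
-/

namespace IsSumOfNCommutators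

variable {A B C : Type*} [Ring A] [Ring B] [Ring C] {k l : ℕ}

theorem zero (k : ℕ) : IsSumOfNCommutators k (0 : A) :=
  ⟨0, 0, by simp⟩

theorem lie (x y : A) : IsSumOfNCommutators 1 ⁅x, y⁆ :=
  ⟨fun _ ↦ x, fun _ ↦ y, by simp [Ring.lie_def]⟩

theorem add {a b : A} (ha : IsSumOfNCommutators k a) (hb : IsSumOfNCommutators l b) :
    IsSumOfNCommutators (k + l) (a + b) := by
  obtain ⟨x, y, rfl⟩ := ha
  obtain ⟨z, w, rfl⟩ := hb
  exact ⟨Fin.append x z, Fin.append y w, by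
    simp only [Fin.sum_univ_add, Fin.append_left, Fin.append_right]⟩

theorem mono {a : A} (hkl : k ≤ l) (ha : IsSumOfNCommutators k a) : IsSumOfNCommutators l a := by
  obtain ⟨d, rfl⟩ := Nat.exists_eq_add_of_le hkl
  simpa only [add_zero] using ha.add (zero d)

theorem map_add_map {φ : A →ₙ+* C} {ψ : B →ₙ+* C} (hφψ : ∀ a b, φ a * ψ b = 0)
    (hψφ : ∀ b a, ψ b * φ a = 0) {a : A} {b : B} (ha : IsSumOfNCommutators k a)
    (hb : IsSumOfNCommutators k b) : IsSumOfNCommutators k (φ a + ψ b) := by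
  obtain ⟨x, y, rfl⟩ := ha
  obtain ⟨z, w, rfl⟩ := hb
  refine ⟨fun i ↦ φ (x i) + ψ (z i), fun i ↦ φ (y i) + ψ (w i), ?_⟩
  simp only [map_sum, map_sub, map_mul, ← Finset.sum_add_distrib]
  refine Finset.sum_congr rfl fun i _ ↦ ?_
  simp only [add_mul, mul_add, hφψ, hψφ]
  abel

end IsSumOfNCommutators

section Corner

variable {R : Type*} {e f : R}

/-- The compression `e * x * e` of `x`, as an element of the corner `eRe`. -/
def toCorner [Semigroup R] (he : IsIdempotentElem e) (x : R) : he.Corner :=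
  ⟨e * x * e, x, rfl⟩

/-- The inclusion of the corner `eRe` into `R`. It is only a non-unital homomorphism: the identity
of the corner is `e`. -/
def cornerSubtype [NonUnitalRing R] (he : IsIdempotentElem e) : he.Corner →ₙ+* R :=
  NonUnitalSubringClass.subtype (NonUnitalRing.corner e)

theorem cornerSubtype_toCorner [NonUnitalRing R] (he : IsIdempotentElem e) (x : R) :
    cornerSubtype he (toCorner he x) = e * x * e :=
  rfl

theorem cornerSubtype_injective [NonUnitalRing R] (he : IsIdempotentElem e) :
    Function.Injective (cornerSubtype he) :=
  Subtype.val_injective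

theorem cornerSubtype_mul_cornerSubtype_of_mul_eq_zero [NonUnitalRing R] (he : IsIdempotentElem e)
    (hf : IsIdempotentElem f) (hef : e * f = 0) (a : he.Corner) (b : hf.Corner) :
    cornerSubtype he a * cornerSubtype hf b = 0 := by
  obtain ⟨_, x, rfl⟩ := a
  obtain ⟨_, y, rfl⟩ := b
  calc e * x * e * (f * y * f) = e * x * (e * f) * y * f := by simp only [mul_assoc]
    _ = 0 := by simp only [hef, mul_zero, zero_mul]

theorem isSumOfNCommutators_toCorner [Ring R] (he : IsIdempotentElem e) {r : R} {m : ℕ}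
    (h : ∃ x y : Fin m → R, e * r * e =
      ∑ i, ((e * x i * e) * (e * y i * e) - (e * y i * e) * (e * x i * e))) :
    IsSumOfNCommutators m (toCorner he r) := by
  obtain ⟨x, y, hxy⟩ := h
  refine ⟨fun i ↦ toCorner he (x i), fun i ↦ toCorner he (y i), cornerSubtype_injective he ?_⟩
  simpa only [map_sum, map_sub, map_mul, cornerSubtype_toCorner] using hxy

theorem eq_peirce_diagonal_add_lie_lie [Ring R] (he : IsIdempotentElem e) (r : R) :
    r = e * r * e + (1 - e) * r * (1 - e) + ⁅e, ⁅e, r⁆⁆ := by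
  have left_absorb : e * (e * r) = e * r := by rw [← mul_assoc, he.eq]
  have right_absorb : r * e * e = r * e := by rw [mul_assoc, he.eq]
  simp only [Ring.lie_def, mul_sub, sub_mul, one_mul, mul_one, left_absorb, right_absorb,
    mul_assoc e r e]
  abel

theorem IsSumOfNCommutators.of_toCorner [Ring R] (he : IsIdempotentElem e) {r : R} {m n : ℕ}
    (hm : IsSumOfNCommutators m (toCorner he r))
    (hn : IsSumOfNCommutators n (toCorner he.one_sub r)) :
    IsSumOfNCommutators (max m n + 1) r := by
  have diagonal : IsSumOfNCommutators (max m n) (e * r * e + (1 - e) * r * (1 - e)) :=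
    map_add_map
      (cornerSubtype_mul_cornerSubtype_of_mul_eq_zero he he.one_sub he.mul_one_sub_self)
      (cornerSubtype_mul_cornerSubtype_of_mul_eq_zero he.one_sub he he.one_sub_mul_self)
      (hm.mono (le_max_left m n)) (hn.mono (le_max_right m n))
  rw [eq_peirce_diagonal_add_lie_lie he r]
  exact diagonal.add (lie e ⁅e, r⁆)

end Corner

/-- If `e` is an idempotent, `f = 1 - e`, `ere` is a sum of `m1` commutators in the corner
`eRe` and `frf` is a sum of `m2` commutators in the corner `fRf`, then `r` is a sum of
`max m1 m2 + 1` commutators in `R`. -/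
theorem stmt_3 {R : Type*} [Ring R] (r e : R) (he : e * e = e) (f : R) (hf : f = 1 - e)
    (m1 m2 : ℕ)
    (h1 : ∃ x y : Fin m1 → R, e * r * e =
      ∑ i, ((e * x i * e) * (e * y i * e) - (e * y i * e) * (e * x i * e)))
    (h2 : ∃ x y : Fin m2 → R, f * r * f =
      ∑ i, ((f * x i * f) * (f * y i * f) - (f * y i * f) * (f * x i * f))) :
    IsSumOfNCommutators (max m1 m2 + 1) r := by
  subst hf
  replace he : IsIdempotentElem e := he
  exact .of_toCorner he (isSumOfNCommutators_toCorner he h1)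
    (isSumOfNCommutators_toCorner he.one_sub h2)
end

section
/- Let R be a ring, N a right R-module, Ω an infinite set, and M = ⨁_{i ∈ Ω} N the direct sum of copies of N indexed by Ω. Then there exists an endomorphism x in End_R(M) such that every element f of End_R(M) can be written as a single commutator f = [x, y] = xy - yx for some y in End_R(M). -/
/-!
Suppose `x` is a locally nilpotent endomorphism with a right inverse `z`. For every `f` the series
`y = ∑ₖ z ^ (k + 1) * f * x ^ k` is finite at each vector, and `y = z * (f + y * x)`; multiplying
by `x` on the left gives `x * y = f + y * x`. On a direct sum of countably many copies of a module,
the left and right shifts are such a pair `x`, `z`, and an infinite `Ω` is in bijection with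
`ℕ × Ω`.
-/

section Stein

variable {S M P : Type*} [Semiring S] [AddCommMonoid M] [Module S M] [AddCommMonoid P] [Module S P]

theorem support_pow_apply_pow_subset {x : Module.End S M} (a : Module.End S P) (g : M →ₗ[S] P)
    {n : ℕ} {m : M} (hn : (x ^ n) m = 0) :
    (Function.support fun k ↦ (a ^ k) (g ((x ^ k) m))) ⊆ Finset.range n := by
  intro k hk
  rw [Finset.coe_range, Set.mem_Iio]
  by_contra! hnk
  exact hk (by simp only [Module.End.pow_map_zero_of_le hnk hn, map_zero])

theorem finite_support_pow_apply_pow {x : Module.End S M} (hx : ∀ m, ∃ n, (x ^ n) m = 0)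
    (a : Module.End S P) (g : M →ₗ[S] P) (m : M) :
    (Function.support fun k ↦ (a ^ k) (g ((x ^ k) m))).Finite :=
  let ⟨n, hn⟩ := hx m
  (Finset.range n).finite_toSet.subset (support_pow_apply_pow_subset a g hn)

/-- The series `∑ₖ aᵏ ∘ g ∘ xᵏ` for a locally nilpotent `x`, which solves the Stein equation
`y = g + a ∘ y ∘ x`. It is encoded pointwise as a `finsum`, whose support is finite by local
nilpotency. -/
noncomputable def steinSolution {x : Module.End S M} (hx : ∀ m, ∃ n, (x ^ n) m = 0)
    (a : Module.End S P) (g : M →ₗ[S] P) : M →ₗ[S] P where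
  toFun m := ∑ᶠ k, (a ^ k) (g ((x ^ k) m))
  map_add' m m' := by
    simp only [map_add]
    exact finsum_add_distrib (finite_support_pow_apply_pow hx a g m)
      (finite_support_pow_apply_pow hx a g m')
  map_smul' s m := by
    simp only [map_smul, RingHom.id_apply]
    exact (smul_finsum' s (finite_support_pow_apply_pow hx a g m)).symm

theorem steinSolution_apply_eq_sum_range {x : Module.End S M} (hx : ∀ m, ∃ n, (x ^ n) m = 0)
    (a : Module.End S P) (g : M →ₗ[S] P) {n : ℕ} {m : M} (hn : (x ^ n) m = 0) :
    steinSolution hx a g m = ∑ k ∈ Finset.range n, (a ^ k) (g ((x ^ k) m)) :=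
  finsum_eq_sum_of_support_subset _ (support_pow_apply_pow_subset a g hn)

theorem steinSolution_eq {x : Module.End S M} (hx : ∀ m, ∃ n, (x ^ n) m = 0)
    (a : Module.End S P) (g : M →ₗ[S] P) :
    steinSolution hx a g = g + a ∘ₗ steinSolution hx a g ∘ₗ x := by
  ext m
  obtain ⟨n, hn⟩ := hx (x m)
  have hn' : (x ^ (n + 1)) m = 0 := by rw [pow_succ, Module.End.mul_apply, hn]
  simp only [LinearMap.add_apply, LinearMap.comp_apply, steinSolution_apply_eq_sum_range hx a g hn,
    steinSolution_apply_eq_sum_range hx a g hn', Finset.sum_range_succ', map_sum, pow_zero,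
    Module.End.one_apply]
  rw [add_comm]
  simp only [pow_succ x, pow_succ' a, Module.End.mul_apply]

end Stein

theorem exists_eq_commutator_of_locallyNilpotent {S M : Type*} [Semiring S] [AddCommGroup M]
    [Module S M] {x z : Module.End S M} (hx : ∀ m, ∃ n, (x ^ n) m = 0) (hxz : x * z = 1)
    (f : Module.End S M) : ∃ y, f = x * y - y * x := by
  let y : Module.End S M := steinSolution hx z (z * f)
  have hy : y = z * f + z * (y * x) := steinSolution_eq hx z (z * f)
  refine ⟨y, eq_sub_of_add_eq ?_⟩
  calc f + y * x = x * z * (f + y * x) := by rw [hxz, one_mul]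
    _ = x * (z * f + z * (y * x)) := by rw [mul_assoc, mul_add]
    _ = x * y := by rw [← hy]

section Shift

variable (S P : Type*) [Semiring S] [AddCommMonoid P] [Module S P]

/-- The left shift `(p₀, p₁, p₂, …) ↦ (p₁, p₂, p₃, …)` on finitely supported sequences. It is the
locally nilpotent endomorphism whose commutators exhaust the endomorphism ring. -/
noncomputable def leftShift : Module.End S (ℕ →₀ P) :=
  Finsupp.lcomapDomain Nat.succ Nat.succ_injective

/-- The right shift `(p₀, p₁, p₂, …) ↦ (0, p₀, p₁, …)` on finitely supported sequences, a right
inverse of `leftShift`. -/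
noncomputable def rightShift : Module.End S (ℕ →₀ P) :=
  Finsupp.lmapDomain P S Nat.succ

theorem leftShift_mul_rightShift : leftShift S P * rightShift S P = 1 :=
  LinearMap.ext <| Finsupp.leftInverse_lcomapDomain_mapDomain (R := S) Nat.succ Nat.succ_injective

variable {P}

theorem leftShift_pow_apply (n : ℕ) (p : ℕ →₀ P) (k : ℕ) :
    (leftShift S P ^ n) p k = p (k + n) := by
  induction n generalizing k with
  | zero => rfl
  | succ n ih =>
    rw [pow_succ', Module.End.mul_apply]
    exact (ih (k + 1)).trans (congrArg p (Nat.succ_add_eq_add_succ k n))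

theorem exists_leftShift_pow_apply_eq_zero (p : ℕ →₀ P) : ∃ n, (leftShift S P ^ n) p = 0 := by
  obtain ⟨b, hb⟩ := p.support.bddAbove
  refine ⟨b + 1, Finsupp.ext fun k ↦ ?_⟩
  rw [leftShift_pow_apply, Finsupp.zero_apply, ← Finsupp.notMem_support_iff]
  intro hk
  have : k + (b + 1) ≤ b := hb hk
  lia

end Shift

theorem nonempty_equiv_nat_prod (Ω : Type*) [Infinite Ω] : Nonempty (Ω ≃ ℕ × Ω) := by
  rw [← Cardinal.eq]
  simp [Cardinal.aleph0_mul_eq]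

theorem nonempty_directSum_linearEquiv_nat_finsupp (S N Ω : Type*) [Semiring S] [AddCommMonoid N]
    [Module S N] [Infinite Ω] :
    Nonempty ((DirectSum Ω fun _ : Ω ↦ N) ≃ₗ[S] (ℕ →₀ Ω →₀ N)) := by
  classical
  obtain ⟨e⟩ := nonempty_equiv_nat_prod Ω
  exact ⟨(finsuppLEquivDirectSum S N Ω).symm ≪≫ₗ Finsupp.domLCongr e ≪≫ₗ
    Finsupp.curryLinearEquiv S⟩

theorem stmt_6_general {S M P : Type*} [Semiring S] [AddCommGroup M] [Module S M]
    [AddCommMonoid P] [Module S P] (e : M ≃ₗ[S] (ℕ →₀ P)) :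
    ∃ x : Module.End S M, ∀ f : Module.End S M, ∃ y, f = x * y - y * x := by
  let φ : Module.End S (ℕ →₀ P) ≃+* Module.End S M := e.symm.conjRingEquiv
  have hnil (m : M) : ∃ n, (φ (leftShift S P) ^ n) m = 0 := by
    obtain ⟨n, hn⟩ := exists_leftShift_pow_apply_eq_zero S (e m)
    refine ⟨n, ?_⟩
    rw [← map_pow]
    exact (congrArg e.symm hn).trans (map_zero e.symm)
  have hinv : φ (leftShift S P) * φ (rightShift S P) = 1 := by
    rw [← map_mul, leftShift_mul_rightShift, map_one]
  exact ⟨φ (leftShift S P), exists_eq_commutator_of_locallyNilpotent hnil hinv⟩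

/-- For an infinite set `Ω` and a right `R`-module `N`, there is an endomorphism `x` of
`M = ⨁_{i ∈ Ω} N` such that every endomorphism of `M` is a single commutator `[x, y]`. -/
theorem stmt_6 {R : Type*} [Ring R] (N : Type*) [AddCommGroup N] [Module Rᵐᵒᵖ N]
    (Ω : Type*) [Infinite Ω] :
    ∃ x : Module.End Rᵐᵒᵖ (DirectSum Ω fun _ : Ω => N),
      ∀ f : Module.End Rᵐᵒᵖ (DirectSum Ω fun _ : Ω => N),
        ∃ y, f = x * y - y * x := by
  obtain ⟨e⟩ := nonempty_directSum_linearEquiv_nat_finsupp Rᵐᵒᵖ N Ω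
  exact stmt_6_general e
end

section
/- Let R be a ring, N a right R-module, Ω an infinite set, and M = ∏_{i ∈ Ω} N the direct product of copies of N indexed by Ω. Then there exists an endomorphism x in End_R(M) such that every element f of End_R(M) can be written as a single commutator f = [x, y] = xy - yx for some y in End_R(M). -/
/-! The left shift `s` on sequences satisfies `s ∘ y = f + y ∘ t` for some `y`, whatever `t` and `f`
are: read coordinatewise this is the recursion `yₙ₊₁ = fₙ + yₙ ∘ t`, to be solved from `y₀ = 0`.
With `t = s` it writes `f` as the commutator `[s, y]`. Since `ℕ × Ω ≃ Ω`, an element of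
`∏_{i ∈ Ω} N` is the same thing as a sequence of such elements. -/

section SequenceShift

variable {S M P : Type*} [Semiring S] [AddCommMonoid M] [Module S M] [AddCommMonoid P] [Module S P]

variable (S P) in
/-- The left shift `(p₀, p₁, p₂, …) ↦ (p₁, p₂, p₃, …)` on the module of sequences in `P`. -/
def seqShift : Module.End S (ℕ → P) :=
  LinearMap.funLeft S P Nat.succ

/-- The `n`-th coordinate of the solution `y` of `seqShift S P ∘ₗ y = f + y ∘ₗ t` with `y₀ = 0`. -/
def shiftSolutionCoord (t : Module.End S M) (f : M →ₗ[S] ℕ → P) : ℕ → M →ₗ[S] P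
  | 0 => 0
  | n + 1 => LinearMap.proj n ∘ₗ f + shiftSolutionCoord t f n ∘ₗ t

/-- The solution `y` of the Sylvester equation `seqShift S P ∘ₗ y = f + y ∘ₗ t` with `y₀ = 0`. -/
def shiftSolution (t : Module.End S M) (f : M →ₗ[S] ℕ → P) : M →ₗ[S] ℕ → P :=
  LinearMap.pi (shiftSolutionCoord t f)

theorem seqShift_comp_shiftSolution (t : Module.End S M) (f : M →ₗ[S] ℕ → P) :
    seqShift S P ∘ₗ shiftSolution t f = f + shiftSolution t f ∘ₗ t :=
  rfl

theorem exists_forall_exists_add_mul_eq_mul_of_linearEquiv (e : M ≃ₗ[S] ℕ → P) :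
    ∃ x : Module.End S M, ∀ f : Module.End S M, ∃ y, f + y * x = x * y := by
  let x : Module.End S M := e.symm ∘ₗ seqShift S P ∘ₗ e
  refine ⟨x, fun f => ⟨e.symm ∘ₗ shiftSolution x (e.toLinearMap ∘ₗ f), LinearMap.ext fun m => ?_⟩⟩
  have sylvester := LinearMap.congr_fun (seqShift_comp_shiftSolution x (e.toLinearMap ∘ₗ f)) m
  apply e.injective
  simpa [x] using sylvester.symm

end SequenceShift

theorem nonempty_nat_prod_equiv_self (Ω : Type*) [Infinite Ω] : Nonempty (ℕ × Ω ≃ Ω) :=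
  Cardinal.eq.1 (by simp)

theorem nonempty_pi_linearEquiv_nat_pi (S N Ω : Type*) [Semiring S] [AddCommMonoid N] [Module S N]
    [Infinite Ω] : Nonempty ((Ω → N) ≃ₗ[S] ℕ → Ω → N) :=
  (nonempty_nat_prod_equiv_self Ω).map fun e =>
    LinearEquiv.funCongrLeft S N e ≪≫ₗ LinearEquiv.curry S N ℕ Ω

theorem stmt_7_general {S : Type*} [Semiring S] (N : Type*) [AddCommMonoid N] [Module S N]
    (Ω : Type*) [Infinite Ω] :
    ∃ x : Module.End S (Ω → N), ∀ f : Module.End S (Ω → N), ∃ y, f + y * x = x * y :=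
  (nonempty_pi_linearEquiv_nat_pi S N Ω).elim exists_forall_exists_add_mul_eq_mul_of_linearEquiv

/-- For an infinite set `Ω` and a right `R`-module `N`, there is an endomorphism `x` of
`M = ∏_{i ∈ Ω} N` such that every endomorphism of `M` is a single commutator `[x, y]`. -/
theorem stmt_7 {R : Type*} [Ring R] (N : Type*) [AddCommGroup N] [Module Rᵐᵒᵖ N]
    (Ω : Type*) [Infinite Ω] :
    ∃ x : Module.End Rᵐᵒᵖ (Ω → N),
      ∀ f : Module.End Rᵐᵒᵖ (Ω → N),
        ∃ y, f = x * y - y * x := by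
  obtain ⟨x, hx⟩ := stmt_7_general (S := Rᵐᵒᵖ) N Ω
  exact ⟨x, fun f => (hx f).imp fun _ => eq_sub_of_add_eq⟩
end

section
/- Let R be a ring, N a right R-module, Ω a nonempty set, and M = ∏_{i ∈ Ω} N the direct product of copies of N indexed by Ω. Then End_R(M) is a commutator ring if and only if either Ω is infinite or End_R(N) is a commutator ring. -/
/-!
For finite `Ω`, `End (Ω → N)` is a matrix ring over `End N`, and a square matrix is a sum of
commutators exactly when its trace is: modulo commutators, `single i k a` equals `single j j a`
when `i = k` and `0` otherwise.

For infinite `Ω`, `Ω → N` is isomorphic to `ℕ → (Ω → N)`. On a module of sequences, let `s` and `t`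
be the right and left shifts, so that `t * s = 1`. Given `φ`, the series
`x = φ t + s φ t² + s² φ t³ + ⋯` is a finite sum in each coordinate and satisfies
`x = φ t + s x t`, whence `x s - s x = φ`.
-/

section SumOfCommutators

variable {A B ι : Type*} [Ring A] [Ring B]

theorem isSumOfCommutators_zero : IsSumOfCommutators (0 : A) :=
  ⟨0, Fin.elim0, Fin.elim0, by simp⟩

theorem isSumOfCommutators_mul_sub_mul (x y : A) : IsSumOfCommutators (x * y - y * x) :=
  ⟨1, fun _ ↦ x, fun _ ↦ y, by simp⟩

theorem IsSumOfCommutators.add_s9 {a b : A} (ha : IsSumOfCommutators a)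
    (hb : IsSumOfCommutators b) : IsSumOfCommutators (a + b) := by
  obtain ⟨m, x, y, rfl⟩ := ha
  obtain ⟨n, z, w, rfl⟩ := hb
  exact ⟨m + n, Fin.append x z, Fin.append y w, by
    simp only [Fin.sum_univ_add, Fin.append_left, Fin.append_right]⟩

theorem IsSumOfCommutators.sum {s : Finset ι} {f : ι → A}
    (hf : ∀ i ∈ s, IsSumOfCommutators (f i)) : IsSumOfCommutators (∑ i ∈ s, f i) :=
  Finset.sum_induction f IsSumOfCommutators (fun _ _ ↦ .add) isSumOfCommutators_zero hf

theorem IsSumOfCommutators.map_s9 {F : Type*} [FunLike F A B] [NonUnitalRingHomClass F A B] (f : F)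
    {a : A} (ha : IsSumOfCommutators a) : IsSumOfCommutators (f a) := by
  obtain ⟨n, x, y, rfl⟩ := ha
  exact ⟨n, f ∘ x, f ∘ y, by simp only [map_sum, map_sub, map_mul, Function.comp_apply]⟩

theorem forall_isSumOfCommutators_congr (e : A ≃+* B) :
    (∀ a : A, IsSumOfCommutators a) ↔ ∀ b : B, IsSumOfCommutators b :=
  ⟨fun h b ↦ e.apply_symm_apply b ▸ (h (e.symm b)).map_s9 e,
    fun h a ↦ e.symm_apply_apply a ▸ (h (e a)).map_s9 e.symm⟩

end SumOfCommutators

section Matrix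

open Matrix

variable {A n : Type*} [Fintype n] [DecidableEq n]

/-- The embedding of `A` as the `(i, i)` corner of the matrix ring, used to turn elements of `A`
into matrices. It is a non-unital homomorphism because it sends `1` to a matrix unit. -/
def matrixCornerHom [NonUnitalNonAssocSemiring A] (i : n) : A →ₙ+* Matrix n n A where
  __ := singleAddMonoidHom i i
  map_mul' a b := (single_mul_single_same (c := a) i i i b).symm

variable [Ring A]

theorem IsSumOfCommutators.trace {M : Matrix n n A} (hM : IsSumOfCommutators M) :
    IsSumOfCommutators M.trace := by
  obtain ⟨k, x, y, rfl⟩ := hM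
  have trace_commutator (X Y : Matrix n n A) :
      (X * Y - Y * X).trace = ∑ i, ∑ j, (X i j * Y j i - Y j i * X i j) := by
    rw [trace_sub]
    simp only [Matrix.trace, diag_apply, mul_apply, Finset.sum_sub_distrib]
    rw [Finset.sum_comm (f := fun i j ↦ Y i j * X j i)]
  simp only [trace_sum, trace_commutator]
  exact .sum fun _ _ ↦ .sum fun _ _ ↦ .sum fun _ _ ↦ isSumOfCommutators_mul_sub_mul _ _

theorem isSumOfCommutators_sub_single_trace (M : Matrix n n A) (j : n) :
    IsSumOfCommutators (M - single j j M.trace) := by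
  have sum_single_mul : ∑ i, ∑ k, single i j (M i k) * single j k 1 = M := by
    simp only [single_mul_single_same, mul_one, ← matrix_eq_sum_single]
  have sum_mul_single : ∑ i, ∑ k, single j k 1 * single i j (M i k) = single j j M.trace := by
    have single_mul_single (i k : n) :
        single j k 1 * single i j (M i k) = if i = k then single j j (M i k) else 0 := by
      split_ifs with h
      · subst h
        rw [single_mul_single_same, one_mul]
      · exact single_mul_single_of_ne _ _ _ _ (Ne.symm h) _
    simp only [single_mul_single, Finset.sum_ite_eq, Finset.mem_univ, if_true]
    exact (map_sum (singleAddMonoidHom j j) M.diag Finset.univ).symm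
  have sub_eq_sum : M - single j j M.trace = ∑ i, ∑ k,
      (single i j (M i k) * single j k 1 - single j k 1 * single i j (M i k)) := by
    simp only [Finset.sum_sub_distrib, sum_single_mul, sum_mul_single]
  rw [sub_eq_sum]
  exact .sum fun _ _ ↦ .sum fun _ _ ↦ isSumOfCommutators_mul_sub_mul _ _

theorem isSumOfCommutators_trace_iff {M : Matrix n n A} :
    IsSumOfCommutators M.trace ↔ IsSumOfCommutators M := by
  refine ⟨fun h ↦ ?_, .trace⟩
  cases isEmpty_or_nonempty n with
  | inl _ => exact Subsingleton.elim 0 M ▸ isSumOfCommutators_zero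
  | inr hn =>
    obtain ⟨j⟩ := hn
    exact sub_add_cancel M (single j j M.trace) ▸
      (isSumOfCommutators_sub_single_trace M j).add_s9 (h.map_s9 (matrixCornerHom j))

theorem forall_isSumOfCommutators_matrix_iff [Nonempty n] :
    (∀ M : Matrix n n A, IsSumOfCommutators M) ↔ ∀ a : A, IsSumOfCommutators a := by
  obtain ⟨i⟩ := ‹Nonempty n›
  exact ⟨fun h a ↦ trace_single_eq_same i a ▸ (h (single i i a)).trace,
    fun h M ↦ isSumOfCommutators_trace_iff.mp (h M.trace)⟩

end Matrix

section Sequences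

variable {S P : Type*} [Semiring S]

section Monoid

variable [AddCommMonoid P] [Module S P]

variable (S P) in
/-- The right shift `(p₀, p₁, …) ↦ (0, p₀, p₁, …)` on sequences in `P`. -/
def sequenceRightShift : Module.End S (ℕ → P) :=
  LinearMap.pi fun
    | 0 => 0
    | k + 1 => LinearMap.proj k

variable (S P) in
/-- The left shift `(p₀, p₁, …) ↦ (p₁, p₂, …)` on sequences in `P`. -/
def sequenceLeftShift : Module.End S (ℕ → P) :=
  LinearMap.funLeft S P Nat.succ

theorem sequenceLeftShift_mul_sequenceRightShift :
    sequenceLeftShift S P * sequenceRightShift S P = 1 :=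
  rfl

/-- The `k`-th coordinate of the series `∑ n, s ^ n * φ * t ^ (n + 1)`, where `s` and `t` are the
right and left shifts. Only the terms with `n ≤ k` contribute to it. -/
def shiftSeriesCoord (φ : Module.End S (ℕ → P)) : ℕ → (ℕ → P) →ₗ[S] P
  | 0 => LinearMap.proj 0 ∘ₗ φ ∘ₗ sequenceLeftShift S P
  | k + 1 => LinearMap.proj (k + 1) ∘ₗ φ ∘ₗ sequenceLeftShift S P +
      shiftSeriesCoord φ k ∘ₗ sequenceLeftShift S P

/-- The series `∑ n, s ^ n * φ * t ^ (n + 1)`, where `s` and `t` are the right and left shifts; its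
commutator with `s` is `φ`. -/
def shiftSeries (φ : Module.End S (ℕ → P)) : Module.End S (ℕ → P) :=
  LinearMap.pi (shiftSeriesCoord φ)

theorem shiftSeries_eq (φ : Module.End S (ℕ → P)) :
    shiftSeries φ = φ * sequenceLeftShift S P +
      sequenceRightShift S P * shiftSeries φ * sequenceLeftShift S P := by
  refine LinearMap.ext fun x ↦ funext fun k ↦ ?_
  cases k with
  | zero => exact (add_zero _).symm
  | succ k => rfl

variable (S P) in
theorem nonempty_linearEquiv_sequences_pi (Ω : Type*) [Infinite Ω] :
    Nonempty ((ℕ → Ω → P) ≃ₗ[S] (Ω → P)) := by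
  have ⟨e⟩ : Nonempty (Ω ≃ ℕ × Ω) := by
    rw [← Cardinal.lift_mk_eq', Cardinal.mk_prod]
    simp
  exact ⟨(LinearEquiv.curry S P ℕ Ω).symm ≪≫ₗ LinearEquiv.funCongrLeft S P e⟩

end Monoid

variable [AddCommGroup P] [Module S P]

theorem shiftSeries_mul_sub_mul (φ : Module.End S (ℕ → P)) :
    shiftSeries φ * sequenceRightShift S P - sequenceRightShift S P * shiftSeries φ = φ := by
  rw [sub_eq_iff_eq_add]
  conv_lhs => rw [shiftSeries_eq]
  simp only [add_mul, mul_assoc, sequenceLeftShift_mul_sequenceRightShift, mul_one]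

end Sequences

section Pi

variable {S N Ω : Type*} [Semiring S] [AddCommGroup N] [Module S N]

theorem exists_end_pi_eq_mul_sub_mul [Infinite Ω] (φ : Module.End S (Ω → N)) :
    ∃ ψ σ : Module.End S (Ω → N), φ = ψ * σ - σ * ψ := by
  obtain ⟨e⟩ := nonempty_linearEquiv_sequences_pi S N Ω
  let c := e.conjRingEquiv
  refine ⟨c (shiftSeries (c.symm φ)), c (sequenceRightShift S (Ω → N)), ?_⟩
  rw [← map_mul, ← map_mul, ← map_sub, shiftSeries_mul_sub_mul, c.apply_symm_apply]

theorem isSumOfCommutators_end_pi [Infinite Ω] (φ : Module.End S (Ω → N)) :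
    IsSumOfCommutators φ := by
  obtain ⟨ψ, σ, rfl⟩ := exists_end_pi_eq_mul_sub_mul φ
  exact isSumOfCommutators_mul_sub_mul ψ σ

theorem forall_isSumOfCommutators_end_pi_iff [Finite Ω] [Nonempty Ω] :
    (∀ φ : Module.End S (Ω → N), IsSumOfCommutators φ) ↔
      ∀ φ : Module.End S N, IsSumOfCommutators φ := by
  classical
  have := Fintype.ofFinite Ω
  exact (forall_isSumOfCommutators_congr (endVecRingEquivMatrixEnd Ω S N)).trans
    forall_isSumOfCommutators_matrix_iff

end Pi

theorem stmt_9_general {S : Type*} [Semiring S] (N : Type*) [AddCommGroup N] [Module S N]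
    (Ω : Type*) [Nonempty Ω] :
    (∀ φ : Module.End S (Ω → N), IsSumOfCommutators φ) ↔
      (Infinite Ω ∨ ∀ φ : Module.End S N, IsSumOfCommutators φ) := by
  cases finite_or_infinite Ω with
  | inl hΩ =>
    rw [forall_isSumOfCommutators_end_pi_iff, or_iff_right (not_infinite_iff_finite.mpr hΩ)]
  | inr hΩ => exact iff_of_true isSumOfCommutators_end_pi (.inl hΩ)

/-- For a nonempty set `Ω` and a right `R`-module `N`, `End (∏_{i ∈ Ω} N)` is a commutator
ring if and only if either `Ω` is infinite or `End N` is a commutator ring. -/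
theorem stmt_9 {R : Type*} [Ring R] (N : Type*) [AddCommGroup N] [Module Rᵐᵒᵖ N]
    (Ω : Type*) [Nonempty Ω] :
    (∀ φ : Module.End Rᵐᵒᵖ (Ω → N), IsSumOfCommutators φ) ↔
      (Infinite Ω ∨ ∀ φ : Module.End Rᵐᵒᵖ N, IsSumOfCommutators φ) :=
  stmt_9_general N Ω
end

section
/- Let R be a ring and n a positive integer. Let X in M_n(R) be the matrix with entry 1 in each position (i+1, i) for i = 1, ..., n-1 and 0 elsewhere (the shift matrix X = Σ_{i=1}^{n-1} E_{i+1,i}), and let Y = E_{nn} be the matrix with entry 1 in position (n,n) and 0 elsewhere. Then for every matrix A in M_n(R) with trace 0, there exist matrices C, D in M_n(R) such that A = [X, C] + [Y, D]. In particular, every n-by-n matrix over R with trace zero is a sum of two commutators in M_n(R). -/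
/-!
Let `S` solve `S = A + X S Xᵀ`, a geometric series that is finite because `X` is nilpotent.
Since `Xᵀ X = 1 - Y`, this gives `A = S - X S Xᵀ = [X, -(S Xᵀ)] + S Y`. The matrix `X S Xᵀ` is `S`
pushed one step down its diagonals, so comparing traces shows that the last diagonal entry of `S`
is `tr A = 0`. Thus `Y S Y = 0`, and then `S Y = [Y, -(S Y)]` because `Y` is idempotent.
-/

theorem exists_eq_add_mul_mul_of_isNilpotent {S : Type*} [Semiring S] {x : S}
    (hx : IsNilpotent x) (a t : S) : ∃ s, s = a + x * s * t := by
  obtain ⟨n, hn⟩ := hx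
  refine ⟨∑ k ∈ Finset.range n, x ^ k * a * t ^ k, ?_⟩
  calc ∑ k ∈ Finset.range n, x ^ k * a * t ^ k
      = ∑ k ∈ Finset.range (n + 1), x ^ k * a * t ^ k := by
        rw [Finset.sum_range_succ, hn, zero_mul, zero_mul, add_zero]
    _ = a + ∑ k ∈ Finset.range n, x ^ (k + 1) * a * t ^ (k + 1) := by
        rw [Finset.sum_range_succ', pow_zero, pow_zero, one_mul, mul_one, add_comm]
    _ = a + x * (∑ k ∈ Finset.range n, x ^ k * a * t ^ k) * t := by
        simp only [Finset.mul_sum, Finset.sum_mul, pow_succ' x, pow_succ t, mul_assoc]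

theorem eq_lie_add_lie_of_eq_add_mul_mul {S : Type*} [Ring S] {x t e a s : S}
    (hs : s = a + x * s * t) (hte : t * x + e = 1) (he : IsIdempotentElem e)
    (hese : e * s * e = 0) : a = ⁅x, -(s * t)⁆ + ⁅e, -(s * e)⁆ := by
  have hx : ⁅x, -(s * t)⁆ = s * (t * x) - x * s * t := by
    rw [Ring.lie_def]
    noncomm_ring
  have hse : ⁅e, -(s * e)⁆ = s * e := by
    rw [Ring.lie_def, mul_neg, ← mul_assoc, hese, neg_mul, mul_assoc, he.eq, neg_zero,
      zero_sub, neg_neg]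
  calc a = s - x * s * t := eq_sub_of_add_eq hs.symm
    _ = s * (t * x + e) - x * s * t := by rw [hte, mul_one]
    _ = ⁅x, -(s * t)⁆ + ⁅e, -(s * e)⁆ := by rw [hx, hse, mul_add]; abel

/-- The lower shift matrix `X = ∑ E_{i+1,i}`, whose commutators reach every matrix of trace `0` up
to its last column. The indices are compared in `ℕ`, so that the shift does not wrap around. -/
def lowerShift (n : ℕ) (R : Type*) [Zero R] [One R] : Matrix (Fin n) (Fin n) R :=
  Matrix.of fun i j => if (i : ℕ) = (j : ℕ) + 1 then 1 else 0

namespace lowerShift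

open Matrix

variable {R ι : Type*} {n : ℕ}

section Entries

variable [Zero R] [One R]

theorem apply_zero_left (j : Fin (n + 1)) : lowerShift (n + 1) R 0 j = 0 := by
  simp [lowerShift]

theorem apply_succ_left (i : Fin n) (j : Fin (n + 1)) :
    lowerShift (n + 1) R i.succ j = if i.castSucc = j then 1 else 0 := by
  simp [lowerShift, Fin.ext_iff]

theorem apply_castSucc_right (i : Fin (n + 1)) (j : Fin n) :
    lowerShift (n + 1) R i j.castSucc = if i = j.succ then 1 else 0 := by
  simp [lowerShift, Fin.ext_iff]

theorem apply_last_right (i : Fin (n + 1)) : lowerShift (n + 1) R i (Fin.last n) = 0 := by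
  simp [lowerShift, i.isLt.ne]

end Entries

section Multiplication

variable [NonAssocSemiring R]

theorem mul_apply_zero (M : Matrix (Fin (n + 1)) ι R) (j : ι) :
    (lowerShift (n + 1) R * M) 0 j = 0 := by
  simp [Matrix.mul_apply, apply_zero_left]

theorem mul_apply_succ (M : Matrix (Fin (n + 1)) ι R) (i : Fin n) (j : ι) :
    (lowerShift (n + 1) R * M) i.succ j = M i.castSucc j := by
  simp [Matrix.mul_apply, apply_succ_left]

theorem mul_transpose_apply_succ (M : Matrix ι (Fin (n + 1)) R) (i : ι) (j : Fin n) :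
    (M * (lowerShift (n + 1) R)ᵀ) i j.succ = M i j.castSucc := by
  simp [Matrix.mul_apply, apply_succ_left]

theorem transpose_mul_apply_castSucc (M : Matrix (Fin (n + 1)) ι R) (i : Fin n) (j : ι) :
    ((lowerShift (n + 1) R)ᵀ * M) i.castSucc j = M i.succ j := by
  simp [Matrix.mul_apply, apply_castSucc_right]

theorem transpose_mul_apply_last (M : Matrix (Fin (n + 1)) ι R) (j : ι) :
    ((lowerShift (n + 1) R)ᵀ * M) (Fin.last n) j = 0 := by
  simp [Matrix.mul_apply, apply_last_right]

theorem transpose_mul_self_add_single_last :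
    (lowerShift (n + 1) R)ᵀ * lowerShift (n + 1) R +
      single (Fin.last n) (Fin.last n) 1 = 1 := by
  ext i j
  rw [Matrix.add_apply]
  cases i using Fin.lastCases with
  | last => simp [transpose_mul_apply_last, single_apply, one_apply]
  | cast i =>
    simp [transpose_mul_apply_castSucc, apply_succ_left, one_apply, i.castSucc_ne_last.symm]

end Multiplication

section Semiring

variable [Semiring R]

theorem pow_apply_eq_zero {k : ℕ} {i : Fin (n + 1)} (hik : (i : ℕ) < k) (j : Fin (n + 1)) :
    (lowerShift (n + 1) R ^ k) i j = 0 := by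
  induction k generalizing i with
  | zero => exact absurd hik (Nat.not_lt_zero _)
  | succ k ih =>
    rw [pow_succ']
    cases i using Fin.cases with
    | zero => exact mul_apply_zero _ j
    | succ i =>
      rw [mul_apply_succ]
      exact ih (Nat.lt_of_succ_lt_succ hik)

theorem isNilpotent : IsNilpotent (lowerShift (n + 1) R) :=
  ⟨n + 1, by ext i j; exact pow_apply_eq_zero i.isLt j⟩

theorem trace_mul_mul_transpose_add_apply_last (M : Matrix (Fin (n + 1)) (Fin (n + 1)) R) :
    trace (lowerShift (n + 1) R * M * (lowerShift (n + 1) R)ᵀ) +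
      M (Fin.last n) (Fin.last n) = trace M := by
  simp only [trace, diag_apply]
  rw [Fin.sum_univ_succ, Fin.sum_univ_castSucc (fun i => M i i), Matrix.mul_assoc,
    mul_apply_zero, zero_add]
  simp only [mul_apply_succ, mul_transpose_apply_succ]

theorem apply_last_eq_trace [IsRightCancelAdd R]
    {A S : Matrix (Fin (n + 1)) (Fin (n + 1)) R}
    (hS : S = A + lowerShift (n + 1) R * S * (lowerShift (n + 1) R)ᵀ) :
    S (Fin.last n) (Fin.last n) = trace A := by
  have htrace := congrArg trace hS
  rw [trace_add, ← trace_mul_mul_transpose_add_apply_last S, add_comm] at htrace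
  exact add_right_cancel htrace

end Semiring

end lowerShift

/-- With `X = Σ_{i=1}^{n-1} E_{i+1,i}` and `Y = E_{nn}`, every `n×n` matrix `A` over a
ring `R` with trace `0` can be written as `[X, C] + [Y, D]`; in particular every traceless
matrix is a sum of two commutators. -/
theorem stmt_11 (R : Type*) [Ring R] (n : ℕ) (hn : 0 < n)
    (X Y : Matrix (Fin n) (Fin n) R)
    (hX : X = Matrix.of fun i j : Fin n => if (i : ℕ) = (j : ℕ) + 1 then (1 : R) else 0)
    (hY : Y = Matrix.of fun i j : Fin n =>
      if (i : ℕ) = n - 1 ∧ (j : ℕ) = n - 1 then (1 : R) else 0) :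
    ∀ A : Matrix (Fin n) (Fin n) R, Matrix.trace A = 0 →
      ∃ C D : Matrix (Fin n) (Fin n) R,
        A = (X * C - C * X) + (Y * D - D * Y) := by
  obtain ⟨m, rfl⟩ : ∃ m, n = m + 1 := Nat.exists_eq_succ_of_ne_zero hn.ne'
  intro A hA
  obtain rfl : X = lowerShift (m + 1) R := hX
  obtain rfl : Y = Matrix.single (Fin.last m) (Fin.last m) 1 := by
    rw [hY]
    ext i j
    simp [Matrix.single_apply, Fin.ext_iff, eq_comm]
  obtain ⟨S, hS⟩ := exists_eq_add_mul_mul_of_isNilpotent lowerShift.isNilpotent A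
    (lowerShift (m + 1) R).transpose
  refine ⟨_, _, eq_lie_add_lie_of_eq_add_mul_mul hS
    lowerShift.transpose_mul_self_add_single_last ?_ ?_⟩
  · simp [IsIdempotentElem]
  · rw [Matrix.single_mul_mul_single, lowerShift.apply_last_eq_trace hS, hA, mul_zero, zero_mul,
      Matrix.single_zero]
end

section
/- Let F be a field and let A, B be matrices in M_2(F) with AB = BA. Then the set { [A,C] + [B,D] : C, D in M_2(F) }, which is an F-linear subspace of M_2(F) (namely the range of the F-linear map (C,D) ↦ [A,C] + [B,D]), has dimension at most 2 over F. -/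
/-!
If `Z` commutes with `A`, then `tr (Z [A, C]) = tr ([Z, A] C) = 0`. Hence, for the nondegenerate
form `(X, Y) ↦ tr (X Y)`, every commutator `[A, C]` with `A ∈ S` is orthogonal to the centralizer
of `S`. When the elements of `S` commute, that centralizer contains both `1` and `S`, so it has
dimension at least `2`: if it consisted only of scalars, then `S` would too, and its centralizer
would be everything.
-/

section Centralizer

variable {F R : Type*} [Field F] [Ring R] [Algebra F R]

theorem two_le_finrank_centralizer {S : Set R} (hS : S ⊆ S.centralizer)
    (hR : 2 ≤ Module.finrank F R) : 2 ≤ Module.finrank F (Subalgebra.centralizer F S) := by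
  have : FiniteDimensional F R := .of_finrank_pos (by lia)
  have : Nontrivial R := Module.nontrivial_of_finrank_pos (R := F) (by lia)
  have hpos : 0 < Module.finrank F (Subalgebra.centralizer F S) := Module.finrank_pos
  by_contra! hlt
  have hbot : Subalgebra.centralizer F S = ⊥ := Subalgebra.eq_bot_of_finrank_one (by lia)
  have hScentral : S ⊆ Subalgebra.center F R := fun A hA =>
    (hbot.trans_le bot_le : Subalgebra.centralizer F S ≤ Subalgebra.center F R) (hS hA)
  have htop : Subalgebra.centralizer F S = ⊤ :=
    (Subalgebra.centralizer_eq_top_iff_subset F).mpr hScentral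
  have hone : Module.finrank F R = 1 :=
    Subalgebra.bot_eq_top_iff_finrank_eq_one.mp (hbot.symm.trans htop)
  lia

end Centralizer

section TraceForm

variable {n R : Type*} [Fintype n] [CommRing R]

theorem trace_mul_commutator_eq_zero {Z A : Matrix n n R} (hZA : Commute Z A)
    (C : Matrix n n R) : (Z * (A * C - C * A)).trace = 0 := by
  rw [mul_sub, Matrix.trace_sub, sub_eq_zero]
  calc (Z * (A * C)).trace = (A * Z * C).trace := by rw [← mul_assoc, hZA.eq]
    _ = (Z * C * A).trace := (Matrix.trace_mul_cycle Z C A).symm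
    _ = (Z * (C * A)).trace := by rw [mul_assoc]

variable (n R) in
/-- The trace form `(X, Y) ↦ tr (X Y)` on square matrices. `Algebra.traceForm`, which uses the
trace of the regular representation, is `Fintype.card n` times this form and can therefore be
degenerate in positive characteristic. -/
def matrixTraceForm : LinearMap.BilinForm R (Matrix n n R) :=
  (LinearMap.mul R (Matrix n n R)).compr₂ (Matrix.traceLinearMap n R R)

theorem matrixTraceForm_apply (X Y : Matrix n n R) :
    matrixTraceForm n R X Y = (X * Y).trace :=
  rfl

theorem matrixTraceForm_nondegenerate : (matrixTraceForm n R).Nondegenerate := by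
  constructor
  · intro X hX
    exact Matrix.ext_iff_trace_mul_right.mpr fun Y => by
      simpa [matrixTraceForm_apply] using hX Y
  · intro Y hY
    exact Matrix.ext_iff_trace_mul_left.mpr fun X => by
      simpa [matrixTraceForm_apply] using hY X

theorem iSup_range_commutator_le_orthogonal_centralizer [DecidableEq n]
    (S : Set (Matrix n n R)) :
    ⨆ A ∈ S, LinearMap.range (LinearMap.mulLeft R A - LinearMap.mulRight R A) ≤
      (matrixTraceForm n R).orthogonal (Subalgebra.centralizer R S).toSubmodule := by
  refine iSup₂_le fun A hA => ?_
  rintro _ ⟨C, rfl⟩ Z hZ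
  exact trace_mul_commutator_eq_zero (hZ A hA).symm C

end TraceForm

section Dimension

variable {n F : Type*} [Fintype n] [Field F]

theorem finrank_iSup_range_commutator_add_finrank_centralizer_le [DecidableEq n]
    (S : Set (Matrix n n F)) :
    Module.finrank F
        ↥(⨆ A ∈ S, LinearMap.range (LinearMap.mulLeft F A - LinearMap.mulRight F A)) +
      Module.finrank F (Subalgebra.centralizer F S) ≤ Fintype.card n ^ 2 := by
  let Z : Submodule F (Matrix n n F) := (Subalgebra.centralizer F S).toSubmodule
  calc _ ≤ Module.finrank F ((matrixTraceForm n F).orthogonal Z) + Module.finrank F Z :=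
        Nat.add_le_add_right
          (Submodule.finrank_mono (iSup_range_commutator_le_orthogonal_centralizer S)) _
    _ = Module.finrank F (Matrix n n F) := by
        rw [LinearMap.BilinForm.finrank_orthogonal matrixTraceForm_nondegenerate,
          Nat.sub_add_cancel Z.finrank_le]
    _ = Fintype.card n ^ 2 := by simp [Module.finrank_matrix, sq]

theorem stmt_14_general [Nontrivial n] (A B : Matrix n n F) (hAB : A * B = B * A)
    (φ : (Matrix n n F × Matrix n n F) →ₗ[F] Matrix n n F)
    (hφ : φ = (LinearMap.mulLeft F A - LinearMap.mulRight F A).coprod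
      (LinearMap.mulLeft F B - LinearMap.mulRight F B)) :
    (LinearMap.range φ : Set (Matrix n n F)) =
      {X | ∃ C D, X = (A * C - C * A) + (B * D - D * B)} ∧
    Module.finrank F (LinearMap.range φ) ≤ Fintype.card n ^ 2 - 2 := by
  classical
  subst hφ
  refine ⟨by ext X; simp [eq_comm], ?_⟩
  have hcomm : ({A, B} : Set (Matrix n n F)) ⊆ Set.centralizer {A, B} := by
    simp [Set.insert_subset_iff, Set.mem_centralizer_iff, hAB]
  have hmatrix : 2 ≤ Module.finrank F (Matrix n n F) := by
    rw [Module.finrank_matrix, Module.finrank_self]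
    nlinarith [Fintype.one_lt_card (α := n)]
  have hcentralizer := two_le_finrank_centralizer (F := F) hcomm hmatrix
  have hsum := finrank_iSup_range_commutator_add_finrank_centralizer_le (F := F) {A, B}
  rw [iSup_pair, ← LinearMap.range_coprod] at hsum
  lia

end Dimension

/-- If `A, B ∈ M₂(F)` commute, then the set `{[A,C] + [B,D] : C, D ∈ M₂(F)}`, i.e. the
range of the `F`-linear map `(C, D) ↦ [A,C] + [B,D]`, is a subspace of `M₂(F)` of
dimension at most `2`. -/
theorem stmt_14 {F : Type*} [Field F] (A B : Matrix (Fin 2) (Fin 2) F)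
    (hAB : A * B = B * A)
    (φ : (Matrix (Fin 2) (Fin 2) F × Matrix (Fin 2) (Fin 2) F) →ₗ[F]
      Matrix (Fin 2) (Fin 2) F)
    (hφ : φ = (LinearMap.mulLeft F A - LinearMap.mulRight F A).coprod
      (LinearMap.mulLeft F B - LinearMap.mulRight F B)) :
    (LinearMap.range φ : Set (Matrix (Fin 2) (Fin 2) F)) =
      {X | ∃ C D, X = (A * C - C * A) + (B * D - D * B)} ∧
    Module.finrank F (LinearMap.range φ) ≤ 2 := by
  simpa using stmt_14_general A B hAB φ hφ
end

section
/- Let F be a field and let R = F[x_{11}, x_{12}, x_{21}]/(x_{11}, x_{12}, x_{21})² be the quotient of the polynomial ring in three variables by the square of the ideal generated by the variables. Then the 2-by-2 matrix X over R whose entries are (row 1: x̄_{11}, x̄_{12}; row 2: x̄_{21}, -x̄_{11}), where x̄ denotes the image of x in R, has trace 0 but is not a commutator in M_2(R); that is, there are no matrices A, B in M_2(R) with X = AB - BA. -/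
/-!
If `M = A * B - B * A`, then `trace (M * A) = trace (M * B) = 0`. For
`M = !![x, y; z, -x]` the first equation reads `(A 0 0 - A 1 1) * x + A 1 0 * y + A 0 1 * z = 0`.
When `x`, `y`, `z` are distinct variables and relations are only imposed in `𝔪 ^ 2`, `𝔪` being the
ideal of the variables, comparing linear terms puts the off-diagonal entries of `A` in `𝔪`, and
likewise those of `B`. Over a commutative ring the diagonal entries of `A * B - B * A` involve only
products of off-diagonal entries of `A` and `B`, so `x ∈ 𝔪 ^ 2`, which is absurd.
-/

namespace MatrixCommutator

section CommRing

variable {n R : Type*} [Fintype n] [CommRing R]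

theorem trace_commutator_mul_left_eq_zero (A B : Matrix n n R) :
    Matrix.trace ((A * B - B * A) * A) = 0 := by
  rw [sub_mul, Matrix.trace_sub, mul_assoc A B A, Matrix.trace_mul_comm A, sub_self]

theorem trace_commutator_mul_right_eq_zero (A B : Matrix n n R) :
    Matrix.trace ((A * B - B * A) * B) = 0 := by
  rw [sub_mul, Matrix.trace_sub, Matrix.trace_mul_comm (A * B) B, mul_assoc B A B, sub_self]

theorem commutator_diag_mem_sq {A B : Matrix n n R} {𝔪 : Ideal R}
    (hA : Pairwise fun i j ↦ A i j ∈ 𝔪) (hB : Pairwise fun i j ↦ B i j ∈ 𝔪) (i : n) :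
    (A * B - B * A) i i ∈ 𝔪 ^ 2 := by
  rw [Matrix.sub_apply, Matrix.mul_apply, Matrix.mul_apply, ← Finset.sum_sub_distrib, sq]
  refine Ideal.sum_mem _ fun j _ ↦ ?_
  obtain rfl | hij := eq_or_ne i j
  · simp [mul_comm]
  · exact sub_mem (Ideal.mul_mem_mul (hA hij) (hB hij.symm))
      (Ideal.mul_mem_mul (hB hij) (hA hij.symm))

theorem not_exists_eq_commutator {M : Matrix n n R} {𝔪 : Ideal R}
    (hM : ∀ A : Matrix n n R, Matrix.trace (M * A) = 0 → Pairwise fun i j ↦ A i j ∈ 𝔪)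
    {i : n} (hi : M i i ∉ 𝔪 ^ 2) : ¬ ∃ A B, M = A * B - B * A := by
  rintro ⟨A, B, rfl⟩
  exact hi <| commutator_diag_mem_sq (hM A (trace_commutator_mul_left_eq_zero A B))
    (hM B (trace_commutator_mul_right_eq_zero A B)) i

theorem trace_mul_traceless_fin_two (x y z : R) (A : Matrix (Fin 2) (Fin 2) R) :
    Matrix.trace (!![x, y; z, -x] * A) = (A 0 0 - A 1 1) * x + A 1 0 * y + A 0 1 * z := by
  simp only [Matrix.trace_fin_two, Matrix.mul_apply, Fin.sum_univ_two, Matrix.of_apply,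
    Matrix.cons_val_zero, Matrix.cons_val_one]
  ring

end CommRing

section Variables

open MvPolynomial

variable {ι σ F : Type*}

section CommSemiring

variable [CommSemiring F]

theorem idealOfVars_fin_three : idealOfVars (Fin 3) F = Ideal.span {X 0, X 1, X 2} := by
  simp [idealOfVars, Fin.range_fin_succ, Fin.tail]

theorem mem_idealOfVars_of_sum_mul_X_mem_sq [Fintype ι] {x : ι → σ} (hx : Function.Injective x)
    {u : ι → MvPolynomial σ F} (h : ∑ i, u i * X (x i) ∈ idealOfVars σ F ^ 2) (i : ι) :
    u i ∈ idealOfVars σ F := by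
  classical
  have coeff_sum : coeff (Finsupp.single (x i) 1) (∑ j, u j * X (x j)) = coeff 0 (u i) := by
    simp [coeff_sum, coeff_mul_X', hx.eq_iff]
  have coeff_zero : coeff 0 (u i) = 0 :=
    coeff_sum ▸ (mem_pow_idealOfVars_iff' 2 _).mp h _ (by simp)
  rw [← pow_one (idealOfVars σ F), mem_pow_idealOfVars_iff']
  intro m hm
  rwa [(Finsupp.degree_eq_zero_iff m).mp (Nat.lt_one_iff.mp hm)]

end CommSemiring

section Quotient

variable [CommRing F] {I : Ideal (MvPolynomial σ F)}

theorem mem_map_idealOfVars_of_sum_mul_mk_X_eq_zero [Fintype ι] (hI : I ≤ idealOfVars σ F ^ 2)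
    {x : ι → σ} (hx : Function.Injective x) {u : ι → MvPolynomial σ F ⧸ I}
    (h : ∑ i, u i * Ideal.Quotient.mk I (X (x i)) = 0) (i : ι) :
    u i ∈ (idealOfVars σ F).map (Ideal.Quotient.mk I) := by
  choose v hv using fun j ↦ Ideal.Quotient.mk_surjective (u j)
  simp only [← hv, ← map_mul, ← map_sum, Ideal.Quotient.eq_zero_iff_mem] at h
  rw [← hv]
  exact Ideal.mem_map_of_mem _ (mem_idealOfVars_of_sum_mul_X_mem_sq hx (hI h) i)

theorem mk_X_notMem_map_idealOfVars_sq [Nontrivial F] (hI : I ≤ idealOfVars σ F ^ 2) (i : σ) :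
    Ideal.Quotient.mk I (X i) ∉ (idealOfVars σ F).map (Ideal.Quotient.mk I) ^ 2 := by
  rw [← Ideal.map_pow, Ideal.mem_quotient_iff_mem hI, X,
    monomial_mem_pow_idealOfVars_iff 2 _ one_ne_zero]
  simp

end Quotient

end Variables

end MatrixCommutator

open MatrixCommutator MvPolynomial in
theorem stmt_15_general {σ F : Type*} [CommRing F] [Nontrivial F]
    {I : Ideal (MvPolynomial σ F)} (hI : I ≤ idealOfVars σ F ^ 2)
    {x : Fin 3 → σ} (hx : Function.Injective x)
    {M : Matrix (Fin 2) (Fin 2) (MvPolynomial σ F ⧸ I)}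
    (hM : M = !![Ideal.Quotient.mk I (X (x 0)), Ideal.Quotient.mk I (X (x 1));
                 Ideal.Quotient.mk I (X (x 2)), -Ideal.Quotient.mk I (X (x 0))]) :
    Matrix.trace M = 0 ∧ ¬ ∃ A B, M = A * B - B * A := by
  subst hM
  refine ⟨by rw [Matrix.trace_fin_two_of, add_neg_cancel],
    not_exists_eq_commutator (fun A hA ↦ ?_) (i := 0) (mk_X_notMem_map_idealOfVars_sq hI (x 0))⟩
  rw [trace_mul_traceless_fin_two] at hA
  have coeff_mem := mem_map_idealOfVars_of_sum_mul_mk_X_eq_zero hI hx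
    (u := ![A 0 0 - A 1 1, A 1 0, A 0 1]) (by simpa [Fin.sum_univ_three] using hA)
  simpa [Pairwise, Fin.forall_fin_two] using And.intro (coeff_mem 2) (coeff_mem 1)

/-- Over `R = F[x₁₁, x₁₂, x₂₁]/(x₁₁, x₁₂, x₂₁)²`, the matrix
`!![x̄₁₁, x̄₁₂; x̄₂₁, -x̄₁₁]` has trace `0` but is not a commutator in `M₂(R)`. -/
theorem stmt_15 (F : Type*) [Field F]
    (I : Ideal (MvPolynomial (Fin 3) F))
    (hI : I = (Ideal.span {MvPolynomial.X 0, MvPolynomial.X 1, MvPolynomial.X 2}) ^ 2)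
    (M : Matrix (Fin 2) (Fin 2) (MvPolynomial (Fin 3) F ⧸ I))
    (hM : M = !![Ideal.Quotient.mk I (MvPolynomial.X 0),
                 Ideal.Quotient.mk I (MvPolynomial.X 1);
                 Ideal.Quotient.mk I (MvPolynomial.X 2),
                 -Ideal.Quotient.mk I (MvPolynomial.X 0)]) :
    Matrix.trace M = 0 ∧ ¬ ∃ A B, M = A * B - B * A := by
  rw [← MatrixCommutator.idealOfVars_fin_three] at hI
  exact stmt_15_general hI.le Function.injective_id hM
end

section
/- Let F be a field, R a commutative F-algebra, and I an ideal of R such that the canonical map from F to R/I (induced by the algebra structure) is bijective, and such that the F-vector space I/I² has dimension at least 3. Then there exists a 2-by-2 matrix X over R with trace 0 that is not a commutator in M_2(R); that is, there are no A, B in M_2(R) with X = AB - BA. -/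
/-!
If `X = AB - BA`, then `tr (XA) = tr (XB) = 0`. When the entries `x, y, z` of
`X = !![x, y; z, -x]` lie in `I` and are linearly independent modulo `I²`, each of these two
relations forces the matrix `A`, respectively `B`, to be scalar modulo `I`. But the commutator of
two matrices that are scalar modulo `I` has all its entries in `I²`, so `x ∈ I²`, a contradiction.
-/

open Matrix

theorem trace_commutator_mul_left {n R : Type*} [Fintype n] [CommRing R] (A B : Matrix n n R) :
    trace ((A * B - B * A) * A) = 0 := by
  rw [sub_mul, trace_sub, trace_mul_comm (A * B) A, ← Matrix.mul_assoc, trace_mul_cycle, sub_self]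

section Commutator

variable {n R : Type*} [Fintype n] [DecidableEq n]

theorem mul_mem_matrix_mul [Semiring R] {I J : Ideal R} {A B : Matrix n n R}
    (hA : A ∈ I.matrix n) (hB : B ∈ J.matrix n) : A * B ∈ (I * J).matrix n :=
  fun i j ↦ sum_mem fun k _ ↦ Ideal.mul_mem_mul (hA i k) (hB k j)

variable [CommRing R]

theorem commutator_mem_matrix_sq {I : Ideal R} {A B : Matrix n n R} {a b : R}
    (hA : A - scalar n a ∈ I.matrix n) (hB : B - scalar n b ∈ I.matrix n) :
    A * B - B * A ∈ (I ^ 2).matrix n := by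
  have hcomm : A * B - B * A =
      (A - scalar n a) * (B - scalar n b) - (B - scalar n b) * (A - scalar n a) := by
    have ha : scalar n a * B = B * scalar n a := scalar_commute a (Commute.all a) B
    have hb : scalar n b * A = A * scalar n b := scalar_commute b (Commute.all b) A
    have hab : scalar n a * scalar n b = scalar n b * scalar n a :=
      scalar_commute a (Commute.all a) _
    simp only [sub_mul, mul_sub, ha, hb, hab]
    abel
  rw [hcomm, pow_two]
  exact sub_mem (mul_mem_matrix_mul hA hB) (mul_mem_matrix_mul hB hA)

end Commutator

section Cotangent

variable {R : Type*} [CommRing R] {I : Ideal R}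

theorem mem_of_sum_mul_mem_sq {ι : Type*} [Fintype ι] {x : ι → I}
    (hx : LinearIndependent (R ⧸ I) fun i ↦ I.toCotangent (x i)) {v : ι → R}
    (hv : ∑ i, v i * x i ∈ I ^ 2) (i : ι) : v i ∈ I := by
  have hrel : ∑ i, Ideal.Quotient.mk I (v i) • I.toCotangent (x i) = 0 :=
    calc ∑ i, Ideal.Quotient.mk I (v i) • I.toCotangent (x i)
        = I.toCotangent (∑ i, v i • x i) := (map_sum I.toCotangent _ _).symm
      _ = 0 := (I.toCotangent_eq_zero _).2 (by simpa using hv)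
  exact Ideal.Quotient.eq_zero_iff_mem.1 (Fintype.linearIndependent_iff.1 hx _ hrel i)

theorem sub_scalar_mem_matrix_of_trace_mul_eq_zero {x : Fin 3 → I}
    (hx : LinearIndependent (R ⧸ I) fun i ↦ I.toCotangent (x i))
    {A : Matrix (Fin 2) (Fin 2) R}
    (hA : trace (!![(x 0 : R), x 1; x 2, -x 0] * A) = 0) :
    A - scalar (Fin 2) (A 1 1) ∈ I.matrix (Fin 2) := by
  have hsum : ∑ i, ![A 0 0 - A 1 1, A 1 0, A 0 1] i * x i = 0 := by
    rw [← hA]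
    simp only [Fin.sum_univ_three, trace_fin_two, mul_apply, Fin.sum_univ_two, of_apply, cons_val]
    ring
  have hmem := mem_of_sum_mul_mem_sq hx (hsum ▸ zero_mem (I ^ 2))
  intro i j
  fin_cases i <;> fin_cases j
  · simpa using hmem 0
  · simpa using hmem 2
  · simpa using hmem 1
  · simp

theorem ne_commutator_of_linearIndependent_toCotangent [Nontrivial (R ⧸ I)]
    {x : Fin 3 → I} (hx : LinearIndependent (R ⧸ I) fun i ↦ I.toCotangent (x i))
    (A B : Matrix (Fin 2) (Fin 2) R) :
    !![(x 0 : R), x 1; x 2, -x 0] ≠ A * B - B * A := by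
  intro hX
  have hA : A - scalar (Fin 2) (A 1 1) ∈ I.matrix (Fin 2) :=
    sub_scalar_mem_matrix_of_trace_mul_eq_zero hx (hX ▸ trace_commutator_mul_left A B)
  have hB : B - scalar (Fin 2) (B 1 1) ∈ I.matrix (Fin 2) := by
    refine sub_scalar_mem_matrix_of_trace_mul_eq_zero hx ?_
    rw [hX, ← neg_sub, neg_mul, trace_neg, trace_commutator_mul_left, neg_zero]
  have hx₀ : (x 0 : R) ∈ I ^ 2 := by
    have hmem := commutator_mem_matrix_sq hA hB
    rw [← hX] at hmem
    exact hmem 0 0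
  exact hx.ne_zero 0 ((I.toCotangent_eq_zero _).2 hx₀)

end Cotangent

theorem stmt_16_general {R : Type*} [CommRing R] (I : Ideal R)
    (hrank : 3 ≤ Module.rank (R ⧸ I) I.Cotangent) :
    ∃ X : Matrix (Fin 2) (Fin 2) R, trace X = 0 ∧ ¬ ∃ A B, X = A * B - B * A := by
  have : Nontrivial (R ⧸ I) := by
    by_contra! h
    rw [rank_subsingleton] at hrank
    norm_num at hrank
  obtain ⟨y, hy⟩ : ∃ y : Fin 3 → I.Cotangent, LinearIndependent (R ⧸ I) y :=
    Module.le_rank_iff.1 (by exact_mod_cast hrank)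
  choose x hx using fun i ↦ I.toCotangent_surjective (y i)
  obtain rfl : (fun i ↦ I.toCotangent (x i)) = y := funext hx
  refine ⟨!![(x 0 : R), x 1; x 2, -x 0], by simp [trace_fin_two], ?_⟩
  rintro ⟨A, B, hX⟩
  exact ne_commutator_of_linearIndependent_toCotangent hy A B hX

/-- If `R` is a commutative `F`-algebra and `I ⊆ R` an ideal with `R/I = F` (the canonical
map `F → R/I` being bijective) and `dim_F I/I² ≥ 3`, then there is a `2×2` matrix over `R`
with trace `0` that is not a commutator in `M₂(R)`. -/
theorem stmt_16 {F : Type*} [Field F] {R : Type*} [CommRing R] [Algebra F R]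
    (I : Ideal R)
    (hbij : Function.Bijective (algebraMap F (R ⧸ I)))
    (hdim : 3 ≤ Module.rank F I.Cotangent) :
    ∃ X : Matrix (Fin 2) (Fin 2) R, Matrix.trace X = 0 ∧
      ¬ ∃ A B, X = A * B - B * A := by
  refine stmt_16_general I (hdim.trans_eq ?_)
  exact rank_eq_of_equiv_equiv _ (AddEquiv.refl _) hbij
    fun r m ↦ (algebraMap_smul R r m).symm
end

section
/- Let p be a prime number and let R be a ring of characteristic p. In the matrix ring M_p(R), let X = Σ_{i=1}^{p-1} E_{i,i+1} and Y = Σ_{i=1}^{p-1} i·E_{i+1,i}. Then XY - YX = 1 (the identity matrix), and the trace of (XY)^{p-1} equals p - 1 (equivalently, equals -1 in R). -/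
/-!
Give the lower shift the weights `c 1, …, c (n - 1)`. Its products with the upper shift are
diagonal; if `c 0 = c n = 0`, the entries are `c (i + 1)` in one order and `c i` in the other. The
sequence with `c 0 = 0` and constant difference `1` is `c i = i`, so the condition `c n = 0` says
that `n = 0` in the ring. Fermat's little theorem then gives the trace.
-/

open Finset Matrix

section Shifts

variable {R : Type*} {n : ℕ}

/-- The upper shift matrix, with ones on the superdiagonal and zeros elsewhere. It plays the role of
`X`. -/
def upperShift (n : ℕ) (R : Type*) [Zero R] [One R] : Matrix (Fin n) (Fin n) R :=
  Matrix.of fun i j => if (j : ℕ) = i + 1 then 1 else 0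

/-- The weighted lower shift, with `c 1, …, c (n - 1)` on the subdiagonal and zeros elsewhere. It
plays the role of `Y` for `c i = i`. The weights are indexed by the zero-based row so that the two
boundary values `c 0` and `c n`, which do not occur in the matrix, can be prescribed. -/
def weightedLowerShift (n : ℕ) [Zero R] (c : ℕ → R) : Matrix (Fin n) (Fin n) R :=
  Matrix.of fun i j => if (i : ℕ) = j + 1 then c (j + 1) else 0

theorem upperShift_mul_weightedLowerShift [NonAssocSemiring R] {c : ℕ → R} (hcn : c n = 0) :
    upperShift n R * weightedLowerShift n c = diagonal fun i : Fin n => c (i + 1) := by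
  ext i k
  simp only [mul_apply, upperShift, weightedLowerShift, of_apply, diagonal_apply, ite_mul, one_mul,
    zero_mul]
  rcases Nat.lt_or_eq_of_le i.isLt with not_last_row | last_row
  · rw [sum_eq_single ⟨i + 1, not_last_row⟩] <;> grind
  · rw [sum_eq_zero] <;> grind

theorem weightedLowerShift_mul_upperShift [NonAssocSemiring R] {c : ℕ → R} (hc0 : c 0 = 0) :
    weightedLowerShift n c * upperShift n R = diagonal fun i : Fin n => c i := by
  ext i k
  simp only [mul_apply, upperShift, weightedLowerShift, of_apply, diagonal_apply, mul_ite, mul_one,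
    mul_zero]
  rcases Nat.eq_zero_or_pos i with first_row | not_first_row
  · rw [sum_eq_zero] <;> grind
  · rw [sum_eq_single ⟨i - 1, by omega⟩] <;> grind

theorem upperShift_weightedLowerShift_commutator [NonAssocRing R] {c : ℕ → R}
    (hc0 : c 0 = 0) (hcn : c n = 0) :
    upperShift n R * weightedLowerShift n c - weightedLowerShift n c * upperShift n R =
      diagonal fun i : Fin n => c (i + 1) - c i := by
  rw [upperShift_mul_weightedLowerShift hcn, weightedLowerShift_mul_upperShift hc0, diagonal_sub]

theorem trace_upperShift_mul_weightedLowerShift_pow [Semiring R] {c : ℕ → R} (hcn : c n = 0)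
    (k : ℕ) :
    trace ((upperShift n R * weightedLowerShift n c) ^ k) = ∑ i ∈ range n, c (i + 1) ^ k := by
  rw [upperShift_mul_weightedLowerShift hcn, diagonal_pow, trace_diagonal]
  exact Fin.sum_univ_eq_sum_range (fun i => c (i + 1) ^ k) n

end Shifts

section Fermat

variable {R : Type*} [Ring R] {p : ℕ} [CharP R p]

theorem natCast_pow_sub_one_eq_one (hp : p.Prime) {a : ℕ} (ha : ¬p ∣ a) :
    (a : R) ^ (p - 1) = 1 := by
  have : Fact p.Prime := ⟨hp⟩
  have fermat : (a : ZMod p) ^ (p - 1) = 1 :=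
    ZMod.pow_card_sub_one_eq_one <| mt (ZMod.natCast_eq_zero_iff a p).1 ha
  simpa using congrArg (ZMod.castHom dvd_rfl R) fermat

theorem sum_range_natCast_succ_pow_sub_one (hp : p.Prime) :
    ∑ i ∈ range p, ((i + 1 : ℕ) : R) ^ (p - 1) = ((p - 1 : ℕ) : R) := by
  have last_term : ((p - 1 + 1 : ℕ) : R) ^ (p - 1) = 0 := by
    rw [Nat.sub_add_cancel hp.one_le, CharP.cast_eq_zero,
      zero_pow (Nat.sub_ne_zero_of_lt hp.one_lt)]
  have other_terms : ∀ i ∈ range (p - 1), ((i + 1 : ℕ) : R) ^ (p - 1) = 1 := fun i hi =>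
    natCast_pow_sub_one_eq_one hp <|
      Nat.not_dvd_of_pos_of_lt i.succ_pos (Nat.add_lt_of_lt_sub (mem_range.1 hi))
  calc ∑ i ∈ range p, ((i + 1 : ℕ) : R) ^ (p - 1)
      = ∑ i ∈ range (p - 1), ((i + 1 : ℕ) : R) ^ (p - 1) + ((p - 1 + 1 : ℕ) : R) ^ (p - 1) := by
        rw [← sum_range_succ (fun i : ℕ => ((i + 1 : ℕ) : R) ^ (p - 1)),
          Nat.sub_add_cancel hp.one_le]
    _ = ((p - 1 : ℕ) : R) := by
        rw [last_term, sum_congr rfl other_terms, add_zero, sum_const, card_range, nsmul_one]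

end Fermat

/-- In `M_p(R)` over a ring `R` of prime characteristic `p`, with
`X = Σ_{i=1}^{p-1} E_{i,i+1}` and `Y = Σ_{i=1}^{p-1} i·E_{i+1,i}`, one has `XY - YX = 1`
and `trace ((XY)^(p-1)) = p - 1`. -/
theorem stmt_17 (p : ℕ) (hp : p.Prime) (R : Type*) [Ring R] [CharP R p]
    (X Y : Matrix (Fin p) (Fin p) R)
    (hX : X = Matrix.of fun i j : Fin p => if (j : ℕ) = (i : ℕ) + 1 then (1 : R) else 0)
    (hY : Y = Matrix.of fun i j : Fin p =>
      if (i : ℕ) = (j : ℕ) + 1 then (((j : ℕ) + 1 : ℕ) : R) else 0) :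
    X * Y - Y * X = 1 ∧ Matrix.trace ((X * Y) ^ (p - 1)) = ((p - 1 : ℕ) : R) := by
  obtain rfl : X = upperShift p R := hX
  obtain rfl : Y = weightedLowerShift p (Nat.cast : ℕ → R) := hY
  have cast_p : (p : R) = 0 := CharP.cast_eq_zero R p
  constructor
  · rw [upperShift_weightedLowerShift_commutator Nat.cast_zero cast_p]
    simp only [Nat.cast_succ, add_sub_cancel_left, diagonal_one]
  · rw [trace_upperShift_mul_weightedLowerShift_pow cast_p]
    exact sum_range_natCast_succ_pow_sub_one hp
end

section
/- Every ring can be embedded in a commutator ring: for every ring R there exist a ring S and an injective ring homomorphism from R to S such that every element of S is a sum of commutators of elements of S (in fact S can be chosen so that every element of S is a single commutator). -/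
universe u

/-!
Let `X` be the shift `m eᵢ ↦ m eᵢ₊₁` on a countable direct sum of copies of a module. For an
endomorphism `A`, the equation `A = X B - B X` evaluated at `m eᵢ` reads
`B (m eᵢ₊₁) = X (B (m eᵢ)) - A (m eᵢ)`, so a solution `B` is found by recursion on `i`, starting
from `B (m e₀) = 0`. Applied to the right `R`-module `R^(ℕ)`, whose endomorphism ring contains `R`
acting by left multiplication, this gives the theorem.
-/

section Shift

variable (k M : Type*) [Semiring k] [AddCommGroup M] [Module k M]

/-- The right shift `m eᵢ ↦ m eᵢ₊₁` on the direct sum of countably many copies of `M`. -/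
noncomputable def finsuppShift : Module.End k (ℕ →₀ M) :=
  Finsupp.lmapDomain M k Nat.succ

theorem finsuppShift_single (i : ℕ) (m : M) :
    finsuppShift k M (Finsupp.single i m) = Finsupp.single (i + 1) m :=
  Finsupp.mapDomain_single

variable {k M}

/-- The restriction to the `i`-th summand of a solution `B` of `⁅finsuppShift k M, B⁆ = A`,
namely the one that vanishes on the `0`-th summand. -/
noncomputable def shiftCommutatorSolutionCol (A : Module.End k (ℕ →₀ M)) : ℕ → M →ₗ[k] ℕ →₀ M
  | 0 => 0
  | i + 1 => finsuppShift k M ∘ₗ shiftCommutatorSolutionCol A i - A ∘ₗ Finsupp.lsingle i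

/-- The solution `B` of `⁅finsuppShift k M, B⁆ = A` that vanishes on the `0`-th summand. -/
noncomputable def shiftCommutatorSolution (A : Module.End k (ℕ →₀ M)) : Module.End k (ℕ →₀ M) :=
  Finsupp.lsum ℕ (shiftCommutatorSolutionCol A)

theorem shiftCommutatorSolution_single_succ (A : Module.End k (ℕ →₀ M)) (i : ℕ) (m : M) :
    shiftCommutatorSolution A (Finsupp.single (i + 1) m) =
      finsuppShift k M (shiftCommutatorSolution A (Finsupp.single i m)) -
        A (Finsupp.single i m) := by
  simp only [shiftCommutatorSolution, Finsupp.lsum_single, shiftCommutatorSolutionCol,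
    LinearMap.sub_apply, LinearMap.comp_apply, Finsupp.lsingle_apply]

theorem lie_finsuppShift_shiftCommutatorSolution (A : Module.End k (ℕ →₀ M)) :
    ⁅finsuppShift k M, shiftCommutatorSolution A⁆ = A := by
  refine Finsupp.lhom_ext fun i m => ?_
  rw [Ring.lie_def, LinearMap.sub_apply, Module.End.mul_apply, Module.End.mul_apply,
    finsuppShift_single, shiftCommutatorSolution_single_succ, sub_sub_cancel]

end Shift

theorem toModuleEnd_injective (k S M : Type*) [Semiring k] [Semiring S] [AddCommMonoid M]
    [Module k M] [Module S M] [SMulCommClass S k M] [FaithfulSMul S M] :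
    Function.Injective (Module.toModuleEnd k M : S →+* Module.End k M) :=
  fun _ _ h => eq_of_smul_eq_smul (LinearMap.congr_fun h)

/-- Every ring embeds in a commutator ring; in fact in a ring in which every element is a
single commutator. -/
theorem stmt_18 (R : Type u) [Ring R] :
    ∃ (S : Type u) (_ : Ring S) (f : R →+* S),
      Function.Injective f ∧ ∀ s : S, ∃ a b : S, s = a * b - b * a :=
  ⟨Module.End Rᵐᵒᵖ (ℕ →₀ R), inferInstance, Module.toModuleEnd Rᵐᵒᵖ (ℕ →₀ R),
    toModuleEnd_injective Rᵐᵒᵖ R (ℕ →₀ R), fun A =>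
      ⟨finsuppShift Rᵐᵒᵖ R, shiftCommutatorSolution A,
        (lie_finsuppShift_shiftCommutatorSolution A).symm⟩⟩
end
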